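/- Correctness of the GHZ-assisted constant-depth Pauli-measurement scheme: let t ≥ 1, d ≥ 1, and let P be a d×d complex matrix. Index the auxiliary register by bit strings x ∈ {0,1}^t and let (Q_x) be any family of d×d matrices with Q_{00…0} = I and Q_{11…1} = P; set U = Σ_x |x⟩⟨x| ⊗ Q_x on ℂ^{2^t} ⊗ ℂ^d (this captures the layer of controlled single-qubit operations whose product over the all-ones string is P). Let GHZ_t = (|0…0⟩ + |1…1⟩)/√2 and let H^{⊗t} be the 2^t × 2^t matrix with entries (H^{⊗t})_{x,y} = 2^{−t/2} (−1)^{x·y}, where x·y = Σᵢ xᵢyᵢ. Then for every ψ ∈ ℂ^d and every outcome string x ∈ {0,1}^t: ((⟨x| H^{⊗t}) ⊗ I) · U · (GHZ_t ⊗ ψ) = 2^{−(t−1)/2} · (1/2)(I + (−1)^{x₁⊕…⊕x_t} P) ψ; i.e., after Hadamards and computational-basis measurements of all t auxiliary qubits with outcomes x, the main register is left (up to normalization) in the projection of ψ onto the (−1)^s-eigenspace of P, where s = x₁⊕…⊕x_t is the parity of the outcomes. -/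

import Mathlib

open Matrix

noncomputable section

/-- The GHZ state `(|0…0⟩ + |1…1⟩)/√2` on `t` qubits, as a vector indexed by bit
strings `Fin t → Fin 2`. -/
def GHZ (t : ℕ) : (Fin t → Fin 2) → ℂ :=
  fun x =>
    ((if x = (fun _ => 0) then (1 : ℂ) else 0) + (if x = (fun _ => 1) then (1 : ℂ) else 0)) /
      ((Real.sqrt 2 : ℝ) : ℂ)

/-- The `t`-fold tensor power of the Hadamard gate, with entries
`(H^{⊗t})_{x,y} = 2^{−t/2} (−1)^{x·y}`. -/
def Hpow (t : ℕ) : Matrix (Fin t → Fin 2) (Fin t → Fin 2) ℂ :=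
  fun x y => ((((Real.sqrt 2 : ℝ) : ℂ)) ^ t)⁻¹ * ((-1 : ℂ)) ^ (∑ i, (x i : ℕ) * (y i : ℕ))

/-- The computational basis vector `|x⟩` of the `t`-qubit auxiliary register. -/
def ketStr {t : ℕ} (x : Fin t → Fin 2) : (Fin t → Fin 2) → ℂ := fun y => if y = x then 1 else 0

/-!
Only the strings `0…0` and `1…1` carry amplitude in the GHZ state, so the controlled layer leaves
just the two branches `Q_{0…0} ψ` and `Q_{1…1} ψ`, each of amplitude `1/√2`. The Hadamard
amplitudes of the outcome `x` on these two strings have the same modulus `2^{-t/2}`, and their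
relative sign is the parity `(-1)^{x₁ + ⋯ + x_t}`, which is therefore the sign between the branches.
-/

section ControlledMatrix

variable {ι m n R : Type*}

/-- The uniformly controlled operation `∑ x, |x⟩⟨x| ⊗ Q x`, applying `Q x` to the main register when
the auxiliary register is in state `x`. It is `Matrix.blockDiagonal` with the block index (the
auxiliary register) as the first factor of the product. -/
def controlledMatrix [DecidableEq ι] [Zero R] (Q : ι → Matrix m n R) :
    Matrix (ι × m) (ι × n) R :=
  fun p q => if p.1 = q.1 then Q p.1 p.2 q.2 else 0

/-- The product state `a ⊗ ψ` of the auxiliary and the main register. -/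
def tensorVec [Mul R] (a : ι → R) (ψ : n → R) : ι × n → R :=
  fun p => a p.1 * ψ p.2

/-- The partial inner product `(⟨φ| ⊗ I) w`: the unnormalized state of the main register after the
auxiliary register has been projected onto `φ`. It is conjugate-linear in `φ`. -/
def partialInner [Fintype ι] [NonUnitalNonAssocSemiring R] [Star R] (φ : ι → R) (w : ι × n → R) :
    n → R :=
  fun i => ∑ y, star (φ y) * w (y, i)

variable [Fintype ι] [DecidableEq ι] [Fintype n]

theorem controlledMatrix_mulVec_apply [NonUnitalNonAssocSemiring R] (Q : ι → Matrix m n R)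
    (w : ι × n → R) (y : ι) (i : m) :
    (controlledMatrix Q *ᵥ w) (y, i) = (Q y *ᵥ fun j => w (y, j)) i := by
  simp [controlledMatrix, mulVec, dotProduct, Fintype.sum_prod_type, ite_mul,
    Finset.sum_ite_irrel]

theorem controlledMatrix_mulVec_tensorVec_apply [CommSemiring R] (Q : ι → Matrix m n R)
    (a : ι → R) (ψ : n → R) (y : ι) (i : m) :
    (controlledMatrix Q *ᵥ tensorVec a ψ) (y, i) = a y * (Q y *ᵥ ψ) i := by
  rw [controlledMatrix_mulVec_apply]
  exact congrFun (mulVec_smul (Q y) (a y) ψ) i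

theorem partialInner_controlledMatrix_mulVec_tensorVec [CommSemiring R] [Star R]
    (Q : ι → Matrix m n R) (φ a : ι → R) (ψ : n → R) :
    partialInner φ (controlledMatrix Q *ᵥ tensorVec a ψ) =
      ∑ y, a y • star (φ y) • (Q y *ᵥ ψ) := by
  ext i
  simp only [partialInner, controlledMatrix_mulVec_tensorVec_apply, Finset.sum_apply,
    Pi.smul_apply, smul_eq_mul, mul_left_comm]

end ControlledMatrix

theorem sum_GHZ_smul {V : Type*} [AddCommMonoid V] [Module ℂ V] (t : ℕ)
    (f : (Fin t → Fin 2) → V) :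
    ∑ y, GHZ t y • f y = ((Real.sqrt 2 : ℝ) : ℂ)⁻¹ • (f (fun _ => 0) + f (fun _ => 1)) := by
  simp only [GHZ, div_eq_inv_mul, mul_smul, ← Finset.smul_sum, add_smul, Finset.sum_add_distrib,
    ite_smul, one_smul, zero_smul, Finset.sum_ite_eq', Finset.mem_univ, if_true]

theorem Hpow_mulVec_ketStr {t : ℕ} (x : Fin t → Fin 2) :
    Hpow t *ᵥ ketStr x = (Hpow t).col x := by
  have ketStr_eq_single : ketStr x = Pi.single x 1 := by
    ext y
    simp only [ketStr, Pi.single_apply]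
  rw [ketStr_eq_single, mulVec_single_one]

theorem star_Hpow_apply {t : ℕ} (x y : Fin t → Fin 2) : star (Hpow t x y) = Hpow t x y := by
  simp [Hpow]

theorem Hpow_zero_left {t : ℕ} (x : Fin t → Fin 2) :
    Hpow t (fun _ => 0) x = (((Real.sqrt 2 : ℝ) : ℂ) ^ t)⁻¹ := by
  simp [Hpow]

theorem Hpow_one_left {t : ℕ} (x : Fin t → Fin 2) :
    Hpow t (fun _ => 1) x = (((Real.sqrt 2 : ℝ) : ℂ) ^ t)⁻¹ * (-1) ^ (∑ i, (x i : ℕ)) := by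
  simp [Hpow]

theorem inv_sqrt_two_pow_succ {t : ℕ} (ht : 1 ≤ t) :
    (((Real.sqrt 2 : ℝ) : ℂ) ^ (t + 1))⁻¹ = (((Real.sqrt 2 : ℝ) : ℂ) ^ (t - 1))⁻¹ * (1 / 2) := by
  have sqrt_two_sq : ((Real.sqrt 2 : ℝ) : ℂ) ^ 2 = 2 := by
    exact_mod_cast Real.sq_sqrt zero_le_two
  rw [show t + 1 = (t - 1) + 2 by lia, pow_add, sqrt_two_sq, mul_inv, one_div]

theorem ghz_constant_depth_pauli_measurement_general {m n : Type*} [Fintype n] {t : ℕ}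
    (Q : (Fin t → Fin 2) → Matrix m n ℂ) (ψ : n → ℂ) (x : Fin t → Fin 2) :
    partialInner (Hpow t *ᵥ ketStr x) (controlledMatrix Q *ᵥ tensorVec (GHZ t) ψ) =
      (((Real.sqrt 2 : ℝ) : ℂ) ^ (t + 1))⁻¹ •
        ((Q (fun _ => 0) + (-1 : ℂ) ^ (∑ i, (x i : ℕ)) • Q (fun _ => 1)) *ᵥ ψ) := by
  rw [partialInner_controlledMatrix_mulVec_tensorVec, sum_GHZ_smul, Hpow_mulVec_ketStr]
  simp_rw [col_apply, star_Hpow_apply]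
  rw [Hpow_zero_left, Hpow_one_left, mul_smul, ← smul_add, smul_smul, ← mul_inv, ← pow_succ',
    add_mulVec, smul_mulVec]

/-- Correctness of the GHZ-assisted constant-depth Pauli-measurement scheme: with the
layer of controlled operations `U = Σ_x |x⟩⟨x| ⊗ Q_x` where `Q_{0…0} = I` and
`Q_{1…1} = P`, applying `U` to `GHZ_t ⊗ ψ` and projecting the auxiliary register onto
`H^{⊗t}|x⟩` leaves the main register in
`2^{−(t−1)/2} · (1/2)(I + (−1)^{x₁⊕…⊕x_t} P) ψ`. -/
theorem ghz_constant_depth_pauli_measurement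
    (t d : ℕ) (ht : 1 ≤ t) (hd : 1 ≤ d)
    (P : Matrix (Fin d) (Fin d) ℂ)
    (Q : (Fin t → Fin 2) → Matrix (Fin d) (Fin d) ℂ)
    (hQ0 : Q (fun _ => 0) = 1) (hQ1 : Q (fun _ => 1) = P)
    (U : Matrix ((Fin t → Fin 2) × Fin d) ((Fin t → Fin 2) × Fin d) ℂ)
    (hU : U = fun p q => if p.1 = q.1 then Q p.1 p.2 q.2 else 0)
    (ψ : Fin d → ℂ) (x : Fin t → Fin 2) :
    (fun i : Fin d =>
        ∑ y : Fin t → Fin 2, star ((Hpow t *ᵥ ketStr x) y) *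
          (U *ᵥ fun p : (Fin t → Fin 2) × Fin d => GHZ t p.1 * ψ p.2) (y, i)) =
      ((((Real.sqrt 2 : ℝ) : ℂ)) ^ (t - 1))⁻¹ •
        (1 / 2 : ℂ) • ((1 + ((-1 : ℂ)) ^ (∑ i, (x i : ℕ)) • P) *ᵥ ψ) := by
  subst hU hQ1
  rw [← smul_assoc, smul_eq_mul, ← inv_sqrt_two_pow_succ ht, ← hQ0]
  exact ghz_constant_depth_pauli_measurement_general Q ψ x

end
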